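/- arXiv:1401.4713 — 3 statements merged into one kernel-verified Lean document; each statement's English description precedes it below -/
import Mathlib

section
/- Let n ≥ 2, m ≥ 1 be integers and let j be an integer with n+1 ≤ j ≤ 2n−1. Let z_0 ∈ ℂ be a periodic point of minimal period m of the map f_0(w) = w^n with z_0 ≠ 0. For a ∈ ℂ define f_a(z) = z^n/(1 − a·z^{j−n}). Suppose z(·) is a holomorphic function on a neighborhood of 0 in ℂ such that z(0) = z_0 and f_a^{∘m}(z(a)) = z(a) for all a in that neighborhood, and let λ(a) denote the derivative of the m-th iterate f_a^{∘m} at the point z(a). Then λ'(0) = (j·n^{m−1} − n^m)·Σ_{i=0}^{m−1} z_0^{n^i(j−n)}. -/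
theorem aux_iter (n k : ℕ) (hn : 1 ≤ n) (a w : ℂ) (m : ℕ)
    (h0 : ∀ i < m + 1, (fun w : ℂ => w ^ n / (1 - a * w ^ k))^[i] w ≠ 0)
    (h1 : ∀ i < m, 1 - a * ((fun w : ℂ => w ^ n / (1 - a * w ^ k))^[i] w) ^ k ≠ 0) :
    HasDerivAt ((fun w : ℂ => w ^ n / (1 - a * w ^ k))^[m])
      ((∏ i ∈ Finset.range m, ((n : ℂ) +
          a * (k * ((fun w : ℂ => w ^ n / (1 - a * w ^ k))^[i] w) ^ k /
            (1 - a * ((fun w : ℂ => w ^ n / (1 - a * w ^ k))^[i] w) ^ k)))) *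
        ((fun w : ℂ => w ^ n / (1 - a * w ^ k))^[m] w / w)) w := by
  induction m with
  | zero =>
    have := h0 0 (by omega)
    simp only [Function.iterate_zero, id] at this
    simpa [div_self this] using hasDerivAt_id w
  | succ m ih =>
    have ih := ih (fun i hi => h0 i (by omega)) (fun i hi => h1 i (by omega))
    have hw := h0 0 (by omega)
    simp only [Function.iterate_zero, id] at hw
    have hv := h0 m (by omega)
    have hd := h1 m (by omega)
    rw [Finset.prod_range_succ]
    simp only [Function.iterate_succ'] at ih ⊢
    simp only [Function.comp_apply]
    set P := ∏ i ∈ Finset.range m, ((n : ℂ) +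
          a * (k * ((fun w : ℂ => w ^ n / (1 - a * w ^ k))^[i] w) ^ k /
            (1 - a * ((fun w : ℂ => w ^ n / (1 - a * w ^ k))^[i] w) ^ k))) with hP
    set v := (fun w : ℂ => w ^ n / (1 - a * w ^ k))^[m] w with hvdef
    have hF : HasDerivAt (fun w : ℂ => w ^ n / (1 - a * w ^ k))
        (((n : ℂ) + a * (k * v ^ k / (1 - a * v ^ k))) * ((v ^ n / (1 - a * v ^ k)) / v)) v := by
      have := (hasDerivAt_pow n v).div
        (((hasDerivAt_pow k v).const_mul a).const_sub 1) hd
      refine this.congr_deriv ?_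
      obtain ⟨n, rfl⟩ : ∃ n', n = n' + 1 := ⟨n - 1, by omega⟩
      rcases k with _ | k
      · simp at hd ⊢
        field_simp
        ring
      · simp only [Nat.add_sub_cancel]
        field_simp
        ring
    refine (HasDerivAt.comp w hF ih).congr_deriv ?_
    field_simp

theorem aux_orbit (n k : ℕ) (z : ℂ → ℂ) (hz : DifferentiableAt ℂ z 0) (i : ℕ) :
    DifferentiableAt ℂ (fun a => (fun w : ℂ => w ^ n / (1 - a * w ^ k))^[i] (z a)) 0 ∧
    (fun w : ℂ => w ^ n / (1 - 0 * w ^ k))^[i] (z 0) = z 0 ^ (n ^ i) := by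
  induction i with
  | zero => simpa using hz
  | succ i ih =>
    obtain ⟨h1, h2⟩ := ih
    simp only [Function.iterate_succ', Function.comp_apply]
    constructor
    · refine (h1.pow n).div ((differentiableAt_const _).sub
        (differentiableAt_id.mul (h1.pow k))) (by simp)
    · rw [h2, pow_succ, pow_mul]; simp

/-- Derivative of the multiplier of a periodic orbit of `f_0(z) = z^n` in the
one-parameter family `f_a(z) = z^n / (1 - a z^{j-n})`, for `n+1 ≤ j ≤ 2n-1`:
`λ'(0) = (j n^{m-1} - n^m) ∑_{i=0}^{m-1} z_0^{n^i (j-n)}`. -/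
theorem multiplier_deriv_rat_family (n m j : ℕ) (hn : 2 ≤ n) (hm : 1 ≤ m)
    (hj1 : n + 1 ≤ j) (hj2 : j ≤ 2 * n - 1)
    (z0 : ℂ) (hz0 : z0 ≠ 0)
    (hper : (fun w : ℂ => w ^ n)^[m] z0 = z0)
    (hmin : ∀ r, 1 ≤ r → r < m → (fun w : ℂ => w ^ n)^[r] z0 ≠ z0)
    (U : Set ℂ) (hU : U ∈ nhds (0 : ℂ))
    (z : ℂ → ℂ) (hzhol : DifferentiableOn ℂ z U) (hz00 : z 0 = z0)
    (hfix : ∀ a ∈ U, (fun w : ℂ => w ^ n / (1 - a * w ^ (j - n)))^[m] (z a) = z a) :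
    deriv (fun a => deriv ((fun w : ℂ => w ^ n / (1 - a * w ^ (j - n)))^[m]) (z a)) 0 =
      ((j : ℂ) * (n : ℂ) ^ (m - 1) - (n : ℂ) ^ m) *
        ∑ i ∈ Finset.range m, z0 ^ ((n : ℤ) ^ i * ((j : ℤ) - (n : ℤ))) := by
  obtain ⟨k, rfl⟩ : ∃ k, j = n + k := ⟨j - n, by omega⟩
  simp only [Nat.add_sub_cancel_left] at hfix ⊢
  have hz : DifferentiableAt ℂ z 0 := hzhol.differentiableAt hU
  have hO := aux_orbit n k z hz
  have hne : ∀ᶠ a in nhds (0 : ℂ), ∀ i ∈ Finset.range (m + 1),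
      (fun w : ℂ => w ^ n / (1 - a * w ^ k))^[i] (z a) ≠ 0 := by
    rw [Filter.eventually_all_finset]
    intro i _
    refine (hO i).1.continuousAt.eventually_ne ?_
    rw [(hO i).2, hz00]
    exact pow_ne_zero _ hz0
  have hne1 : ∀ᶠ a in nhds (0 : ℂ), ∀ i ∈ Finset.range m,
      1 - a * ((fun w : ℂ => w ^ n / (1 - a * w ^ k))^[i] (z a)) ^ k ≠ 0 := by
    rw [Filter.eventually_all_finset]
    intro i _
    have hc : DifferentiableAt ℂ
        (fun a => 1 - a * ((fun w : ℂ => w ^ n / (1 - a * w ^ k))^[i] (z a)) ^ k) 0 :=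
      (differentiableAt_const _).sub (differentiableAt_id.mul ((hO i).1.pow k))
    exact hc.continuousAt.eventually_ne (by simp)
  have heq : (fun a => deriv ((fun w : ℂ => w ^ n / (1 - a * w ^ k))^[m]) (z a)) =ᶠ[nhds 0]
      fun a => ∏ i ∈ Finset.range m, ((n : ℂ) +
          a * (k * ((fun w : ℂ => w ^ n / (1 - a * w ^ k))^[i] (z a)) ^ k /
            (1 - a * ((fun w : ℂ => w ^ n / (1 - a * w ^ k))^[i] (z a)) ^ k))) := by
    filter_upwards [hne, hne1, hU] with a h0 h1 ha
    have := aux_iter n k (by omega) a (z a) m (fun i hi => h0 i (Finset.mem_range.2 hi))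
      (fun i hi => h1 i (Finset.mem_range.2 hi))
    have hza : z a ≠ 0 := by simpa using h0 0 (by simp)
    rw [this.deriv, hfix a ha, div_self hza, mul_one]
  rw [heq.deriv_eq]
  have hg : ∀ i ∈ Finset.range m, HasDerivAt (fun a : ℂ => (n : ℂ) +
          a * (k * ((fun w : ℂ => w ^ n / (1 - a * w ^ k))^[i] (z a)) ^ k /
            (1 - a * ((fun w : ℂ => w ^ n / (1 - a * w ^ k))^[i] (z a)) ^ k)))
      (k * (z0 ^ (n ^ i)) ^ k) 0 := by
    intro i _
    have hq : DifferentiableAt ℂ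
        (fun a => (k * ((fun w : ℂ => w ^ n / (1 - a * w ^ k))^[i] (z a)) ^ k /
            (1 - a * ((fun w : ℂ => w ^ n / (1 - a * w ^ k))^[i] (z a)) ^ k) : ℂ)) 0 :=
      ((differentiableAt_const _).mul ((hO i).1.pow k)).div
        ((differentiableAt_const _).sub (differentiableAt_id.mul ((hO i).1.pow k))) (by simp)
    refine (((hasDerivAt_id (0 : ℂ)).mul hq.hasDerivAt).const_add (n : ℂ)).congr_deriv ?_
    rw [(hO i).2, hz00]
    simp
  rw [(HasDerivAt.fun_finsetProd hg).deriv]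
  rw [Finset.mul_sum]
  refine Finset.sum_congr rfl fun i hi => ?_
  have hexp : z0 ^ ((n : ℤ) ^ i * (((n + k : ℕ) : ℤ) - (n : ℤ))) = (z0 ^ (n ^ i)) ^ k := by
    rw [← pow_mul, ← zpow_natCast]
    congr 1
    push_cast
    ring
  rw [hexp]
  simp only [zero_mul, add_zero, Finset.prod_const, Finset.card_erase_of_mem hi,
    Finset.card_range, smul_eq_mul]
  obtain ⟨m, rfl⟩ : ∃ m', m = m' + 1 := ⟨m - 1, by omega⟩
  simp only [Nat.add_sub_cancel]
  push_cast
  ring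
end

section
/- Let n ≥ 2 and m ≥ 1 be integers, and let j_1, j_2 be integers with 0 ≤ j_1 < j_2 ≤ n−2. Then the polynomials P_{n,j_1,m} and P_{n,j_2,m} have no monomial terms of the same degree; that is, their supports (the sets of exponents with nonzero coefficient) are disjoint. -/
/-- The polynomial `P_{n,j,m} ∈ ℂ[z]` from Proposition 4.3:
`P_{n,j,m}(z) = (j n^{m-1} - n^m)(z^{(j+1)n^{m-1}-1} + ∑_{i=0}^{m-2} z^{n^i(j-n)+n^{m-1}})`
for `0 ≤ j ≤ n-2` (where `n^i(j-n) + n^{m-1} = n^{m-1} - n^i (n-j)` is a nonnegative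
integer), `P_{n,j,m}(z) = (j n^{m-1} - n^m) ∑_{i=0}^{m-1} z^{n^i(j-n)+n^{m-1}}` for
`n+1 ≤ j ≤ 2n-2`, and
`P_{n,j,m}(z) = (j n^{m-1} - n^m)(z + ∑_{i=0}^{m-2} z^{n^i(n-1)+n^{m-1}})` for `j = 2n-1`. -/
noncomputable def P (n j m : ℕ) : Polynomial ℂ :=
  Polynomial.C ((j : ℂ) * (n : ℂ) ^ (m - 1) - (n : ℂ) ^ m) *
    (if j ≤ n - 2 then
      Polynomial.X ^ ((j + 1) * n ^ (m - 1) - 1) +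
        ∑ i ∈ Finset.range (m - 1), Polynomial.X ^ (n ^ (m - 1) - n ^ i * (n - j))
    else if j ≤ 2 * n - 2 then
      ∑ i ∈ Finset.range m, Polynomial.X ^ (n ^ i * (j - n) + n ^ (m - 1))
    else
      Polynomial.X +
        ∑ i ∈ Finset.range (m - 1), Polynomial.X ^ (n ^ i * (n - 1) + n ^ (m - 1)))

theorem P_mem_support_low (n j m e : ℕ) (hj : j ≤ n - 2) (he : e ∈ (P n j m).support) :
    e = (j + 1) * n ^ (m - 1) - 1 ∨ ∃ i < m - 1, e = n ^ (m - 1) - n ^ i * (n - j) := by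
  by_contra! hcon
  obtain ⟨h1, h2⟩ := hcon
  rw [Polynomial.mem_support_iff] at he
  apply he
  rw [P, if_pos hj, Polynomial.coeff_C_mul, Polynomial.coeff_add, Polynomial.finsetSum_coeff,
    Polynomial.coeff_X_pow, if_neg h1, Finset.sum_eq_zero]
  · simp
  · intro i hi
    rw [Polynomial.coeff_X_pow, if_neg (h2 i (Finset.mem_range.mp hi))]

theorem pow_mul_bounds (n j m i : ℕ) (hn : 2 ≤ n) (hj : j ≤ n - 2) (hi : i < m - 1) :
    2 ≤ n ^ i * (n - j) ∧ n ^ i * (n - j) ≤ n ^ (m - 1) := by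
  constructor
  · have h1 : 1 ≤ n ^ i := Nat.one_le_pow _ _ (by omega)
    have h2 : 2 ≤ n - j := by omega
    nlinarith
  · calc n ^ i * (n - j) ≤ n ^ i * n := Nat.mul_le_mul_left _ (by omega)
      _ = n ^ (i + 1) := (pow_succ _ _).symm
      _ ≤ n ^ (m - 1) := Nat.pow_le_pow_right (by omega) (by omega)

theorem pow_mul_ne (n a b i k : ℕ) (ha : 1 ≤ a) (hb : 2 ≤ b) (hab : b < a) (han : a ≤ n) :
    n ^ i * a ≠ n ^ k * b := by
  intro h
  have hi : 0 < n ^ i := Nat.pow_pos (by omega)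
  have hk : 0 < n ^ k := Nat.pow_pos (by omega)
  rcases lt_trichotomy i k with hik | hik | hik
  · have : n ^ (i + 1) ≤ n ^ k := Nat.pow_le_pow_right (by omega) hik
    rw [pow_succ] at this
    nlinarith [Nat.mul_le_mul_left (n ^ i) han, Nat.mul_le_mul_left (n ^ k) hb]
  · subst hik
    have := Nat.eq_of_mul_eq_mul_left hi h
    omega
  · have : n ^ (k + 1) ≤ n ^ i := Nat.pow_le_pow_right (by omega) hik
    rw [pow_succ] at this
    have h3 : n ^ k * b < n ^ k * n := Nat.mul_lt_mul_of_pos_left (by omega) hk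
    nlinarith [Nat.mul_le_mul_left (n ^ i) ha]

/-- Proposition 4.3, property (a): for `0 ≤ j₁ < j₂ ≤ n-2`, the polynomials
`P_{n,j₁,m}` and `P_{n,j₂,m}` have no monomial terms of the same degree, i.e. their
supports are disjoint. -/
theorem P_supports_disjoint_low (n m j1 j2 : ℕ) (hn : 2 ≤ n) (hm : 1 ≤ m)
    (h12 : j1 < j2) (hj2 : j2 ≤ n - 2) :
    Disjoint (P n j1 m).support (P n j2 m).support := by
  rw [Finset.disjoint_left]
  intro e h1 h2
  have hN : 1 ≤ n ^ (m - 1) := Nat.one_le_pow _ _ (by omega)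
  have hj1 : j1 ≤ n - 2 := by omega
  have key : ∀ j, n ^ (m - 1) ≤ (j + 1) * n ^ (m - 1) := fun j =>
    Nat.le_mul_of_pos_left _ (by omega)
  rcases P_mem_support_low n j1 m e hj1 h1 with ha | ⟨i, hi, ha⟩ <;>
    rcases P_mem_support_low n j2 m e hj2 h2 with hb | ⟨k, hk, hb⟩
  · have h3 : (j1 + 1) * n ^ (m - 1) < (j2 + 1) * n ^ (m - 1) :=
      Nat.mul_lt_mul_of_pos_right (by omega) hN
    have := key j1
    omega
  · have := key j1
    have := pow_mul_bounds n j2 m k hn hj2 hk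
    omega
  · have := key j2
    have := pow_mul_bounds n j1 m i hn hj1 hi
    omega
  · have := pow_mul_bounds n j1 m i hn hj1 hi
    have := pow_mul_bounds n j2 m k hn hj2 hk
    have := pow_mul_ne n (n - j1) (n - j2) i k (by omega) (by omega) (by omega) (by omega)
    omega
end

section
/- Let n ≥ 2 be an integer and J_n = {0,…,n−2} ∪ {n+1,…,2n−1}. Let (m_k)_{k∈J_n} be positive integers with m_k ≥ 2 for all k with n+1 ≤ k ≤ 2n−3 and with m_{2n−2} ≥ 3. Fix j ∈ J_n with 1 ≤ j ≤ 2n−2. Suppose there exist nonzero complex numbers z_k (for k ∈ J_n with k < j), each a periodic point of minimal period m_k of the map f_0(w) = w^n, such that the square matrix with rows and columns indexed by {k ∈ J_n : k < j} and with (k,i)-entry z_k^{−n^{m_k−1}}·P_{n,i,m_k}(z_k) is invertible. Then there exist nonzero complex numbers z_k (for k ∈ J_n with k ≤ j), each a periodic point of minimal period m_k of f_0, such that the square matrix with rows and columns indexed by {k ∈ J_n : k ≤ j} and with (k,i)-entry z_k^{−n^{m_k−1}}·P_{n,i,m_k}(z_k) is invertible. -/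
/-- The set of periodic points `z ∈ ℂ` of minimal period `m` of the map `f₀(w) = wⁿ`:
`f₀^∘m(z) = z` and `f₀^∘r(z) ≠ z` for all `1 ≤ r < m`. -/
def perSet (n m : ℕ) : Set ℂ :=
  {z : ℂ | (fun w : ℂ => w ^ n)^[m] z = z ∧
    ∀ r, 1 ≤ r → r < m → (fun w : ℂ => w ^ n)^[r] z ≠ z}

/-- The index set `J_n = {0,…,n-2} ∪ {n+1,…,2n-1}`. -/
def Jset (n : ℕ) : Finset ℕ :=
  (Finset.range (2 * n)).filter (fun k => k ≠ n - 1 ∧ k ≠ n)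

lemma perSet_iter (n r : ℕ) (z : ℂ) : (fun w : ℂ => w ^ n)^[r] z = z ^ (n ^ r) := by
  induction r generalizing z with
  | zero => simp
  | succ r ih => rw [Function.iterate_succ_apply, ih, ← pow_mul, pow_succ, mul_comm]

lemma sum_bound (n : ℕ) (hn : 2 ≤ n) (k : ℕ) :
    ∑ r ∈ Finset.Icc 1 k, (n ^ r - 1) ≤ 2 * n ^ k - 2 := by
  induction k with
  | zero => simp
  | succ k ih =>
    rw [Finset.sum_Icc_succ_top (by omega)]
    have h1 : 1 ≤ n ^ k := Nat.one_le_pow _ _ (by omega)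
    have h2 : 2 * n ^ k ≤ n ^ (k + 1) := by rw [pow_succ]; nlinarith
    omega

open Classical in
lemma good_set (n : ℕ) (hn : 2 ≤ n) (m : ℕ) (hm : 1 ≤ m) :
    ∃ G : Finset ℂ, (∀ x ∈ G, x ≠ 0 ∧ x ∈ perSet n m) ∧
      (n - 1) * n ^ (m - 1) ≤ G.card ∧ (3 ≤ m → (n - 1) * n ^ (m - 1) < G.card) := by
  let T : ℕ → Finset ℂ := fun r => Polynomial.nthRootsFinset (n ^ r - 1) (1 : ℂ)
  have hpos : ∀ r, 1 ≤ r → 0 < n ^ r - 1 := by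
    intro r hr
    have : n ^ 1 ≤ n ^ r := Nat.pow_le_pow_right (by omega) hr
    simp at this; omega
  have hcard : ∀ r, 1 ≤ r → (T r).card = n ^ r - 1 := by
    intro r hr
    have := hpos r hr
    exact (Complex.isPrimitiveRoot_exp (n ^ r - 1) (by omega)).card_nthRootsFinset
  have hmem : ∀ r, 1 ≤ r → ∀ x, x ∈ T r ↔ x ^ (n ^ r - 1) = 1 := by
    intro r hr x
    exact Polynomial.mem_nthRootsFinset (hpos r hr) 1
  let B := (Finset.Icc 1 (m / 2)).biUnion T
  have hB : B.card ≤ ∑ r ∈ Finset.Icc 1 (m / 2), (n ^ r - 1) := by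
    refine Finset.card_biUnion_le.trans (Finset.sum_le_sum ?_)
    intro r hr
    rw [hcard r (Finset.mem_Icc.1 hr).1]
  have hG : (T m).card - B.card ≤ (T m \ B).card := Finset.le_card_sdiff _ _
  rw [hcard m hm] at hG
  have hnm : n ^ m = n ^ (m - 1) * n := by rw [← pow_succ]; congr 1; omega
  have hq : 1 ≤ n ^ (m - 1) := Nat.one_le_pow _ _ (by omega)
  have hnm' : n ^ m = (n - 1) * n ^ (m - 1) + n ^ (m - 1) := by
    rw [hnm]; obtain ⟨a, rfl⟩ := Nat.exists_eq_add_of_le' (show 1 ≤ n by omega)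
    simp; ring
  have h3 : 3 ≤ m → B.card + 2 ≤ n ^ (m - 1) := by
    intro h3
    have e1 := sum_bound n hn (m / 2)
    have e2 : n ^ (m / 2) ≤ n ^ (m - 2) := Nat.pow_le_pow_right (by omega) (by omega)
    have e3 : n ^ (m - 1) = n ^ (m - 2) * n := by rw [← pow_succ]; congr 1; omega
    have e4 : 1 ≤ n ^ (m / 2) := Nat.one_le_pow _ _ (by omega)
    have e5 : n ^ (m - 2) * 2 ≤ n ^ (m - 2) * n := Nat.mul_le_mul_left _ hn
    omega
  refine ⟨T m \ B, ?_, ?_, ?_⟩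
  · intro x hx
    rw [Finset.mem_sdiff] at hx
    obtain ⟨hxT, hxB⟩ := hx
    rw [hmem m hm] at hxT
    have hx0 : x ≠ 0 := by
      rintro rfl
      rw [zero_pow (hpos m hm).ne'] at hxT
      exact zero_ne_one hxT
    have hper : (fun w : ℂ => w ^ n)^[m] x = x := by
      rw [perSet_iter]
      have : n ^ m = (n ^ m - 1) + 1 := by have := hpos m hm; omega
      rw [this, pow_succ, hxT, one_mul]
    refine ⟨hx0, hper, ?_⟩
    intro r hr1 hr2 hr
    apply hxB
    set f : ℂ → ℂ := fun w : ℂ => w ^ n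
    have hd : Function.minimalPeriod f x ∣ m := Function.IsPeriodicPt.minimalPeriod_dvd hper
    have hle : Function.minimalPeriod f x ≤ r :=
      Function.IsPeriodicPt.minimalPeriod_le (by omega) hr
    have hp : 0 < Function.minimalPeriod f x :=
      Function.IsPeriodicPt.minimalPeriod_pos (by omega) hr
    have hpp : f^[Function.minimalPeriod f x] x = x := Function.iterate_minimalPeriod
    generalize Function.minimalPeriod f x = p at *
    obtain ⟨c, hc⟩ := hd
    have hc2 : 2 ≤ c := by
      by_contra hcc
      have : c = 0 ∨ c = 1 := by omega
      rcases this with rfl | rfl <;> omega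
    have hpm : p ≤ m / 2 := by
      rw [Nat.le_div_iff_mul_le (by omega)]; nlinarith
    refine Finset.mem_biUnion.2 ⟨p, Finset.mem_Icc.2 ⟨hp, hpm⟩, ?_⟩
    rw [hmem p hp]
    rw [perSet_iter] at hpp
    have : n ^ p = (n ^ p - 1) + 1 := by have := hpos p hp; omega
    rw [this, pow_succ] at hpp
    exact mul_right_cancel₀ hx0 (by rw [hpp, one_mul])
  · rcases lt_or_ge m 3 with h | h
    · have : m = 1 ∨ m = 2 := by omega
      rcases this with rfl | rfl
      · have hs : ∑ r ∈ Finset.Icc 1 (1 / 2), (n ^ r - 1) = 0 := by simp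
        have e1 : n ^ (1 - 1) = 1 := by simp
        have e2 : (n - 1) * n ^ (1 - 1) = n - 1 := by simp
        omega
      · norm_num at hB hG hnm' ⊢
        omega
    · have := h3 h; omega
  · intro h; have := h3 h; omega

/-- The distinguished exponent. -/
def Eexp (n j m : ℕ) : ℕ :=
  if j ≤ n - 2 then (j + 1) * n ^ (m - 1) - 1 else (j - n + 1) * n ^ (m - 1)

lemma pow_aux (n m s : ℕ) (hn : 2 ≤ n) (hs : s < m - 1) :
    1 ≤ n ^ s ∧ n ^ s * n ≤ n ^ (m - 1) := by
  refine ⟨Nat.one_le_pow _ _ (by omega), ?_⟩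
  rw [← pow_succ]
  exact Nat.pow_le_pow_right (by omega) (by omega)

lemma P_natDegree_low (n i j m : ℕ) (hn : 2 ≤ n) (hij : i ≤ j) (hj : j ≤ n - 2) :
    (P n i m).natDegree ≤ (j + 1) * n ^ (m - 1) - 1 := by
  have hq : 1 ≤ n ^ (m - 1) := Nat.one_le_pow _ _ (by omega)
  rw [P, if_pos (by omega)]
  refine (Polynomial.natDegree_C_mul_le _ _).trans ?_
  refine Polynomial.natDegree_add_le_of_degree_le ?_ ?_
  · rw [Polynomial.natDegree_X_pow]
    exact Nat.sub_le_sub_right (Nat.mul_le_mul_right _ (by omega)) 1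
  · refine Polynomial.natDegree_sum_le_of_forall_le _ _ ?_
    intro s hs
    rw [Polynomial.natDegree_X_pow]
    obtain ⟨h1, h2⟩ := pow_aux n m s hn (Finset.mem_range.1 hs)
    have : 1 ≤ n ^ s * (n - i) := Nat.mul_pos (by omega) (by omega)
    have : n ^ (m - 1) ≤ (j + 1) * n ^ (m - 1) := Nat.le_mul_of_pos_left _ (by omega)
    omega

lemma P_natDegree_high (n i j m : ℕ) (hn : 2 ≤ n) (hm : 1 ≤ m) (hi : i ∈ Jset n) (hij : i ≤ j)
    (hj : n + 1 ≤ j) (hj2 : j ≤ 2 * n - 2) :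
    (P n i m).natDegree ≤ max ((n - 1) * n ^ (m - 1) - 1) ((j - n + 1) * n ^ (m - 1)) := by
  simp only [Jset, Finset.mem_filter, Finset.mem_range] at hi
  by_cases h : i ≤ n - 2
  · refine le_max_of_le_left ?_
    have := P_natDegree_low n i (n - 2) m hn h le_rfl
    rwa [show n - 2 + 1 = n - 1 by omega] at this
  · refine le_max_of_le_right ?_
    rw [P, if_neg h, if_pos (by omega)]
    refine (Polynomial.natDegree_C_mul_le _ _).trans ?_
    refine Polynomial.natDegree_sum_le_of_forall_le _ _ ?_
    intro s hs
    rw [Polynomial.natDegree_X_pow]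
    have h1 : n ^ s ≤ n ^ (m - 1) :=
      Nat.pow_le_pow_right (by omega) (by have := Finset.mem_range.1 hs; omega)
    have : n ^ s * (i - n) ≤ n ^ (m - 1) * (j - n) := Nat.mul_le_mul h1 (by omega)
    nlinarith

lemma P_coeff_zero (n i j m : ℕ) (hn : 2 ≤ n) (hm : 1 ≤ m) (hi : i ∈ Jset n) (hj : j ∈ Jset n)
    (hij : i < j) (hj2 : j ≤ 2 * n - 2) (hm2 : n + 1 ≤ j → 2 ≤ m) :
    (P n i m).coeff (Eexp n j m) = 0 := by
  simp only [Jset, Finset.mem_filter, Finset.mem_range] at hi hj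
  have hq : 1 ≤ n ^ (m - 1) := Nat.one_le_pow _ _ (by omega)
  rw [P, Polynomial.coeff_C_mul]
  refine mul_eq_zero_of_right _ ?_
  by_cases hjl : j ≤ n - 2
  · rw [if_pos (by omega), Polynomial.coeff_add, Polynomial.finsetSum_coeff, Eexp, if_pos hjl]
    have hlt : (i + 1) * n ^ (m - 1) + n ^ (m - 1) ≤ (j + 1) * n ^ (m - 1) := by nlinarith
    have hlt2 : n ^ (m - 1) ≤ (i + 1) * n ^ (m - 1) := Nat.le_mul_of_pos_left _ (by omega)
    rw [Polynomial.coeff_X_pow, if_neg (by omega), zero_add]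
    refine Finset.sum_eq_zero ?_
    intro s hs
    have : 1 ≤ n ^ s * (n - i) :=
      Nat.mul_pos (Nat.one_le_pow _ _ (by omega)) (by omega)
    rw [Polynomial.coeff_X_pow, if_neg]
    omega
  · rw [Eexp, if_neg hjl]
    have hge : 2 * n ^ (m - 1) ≤ (j - n + 1) * n ^ (m - 1) := Nat.mul_le_mul_right _ (by omega)
    have hm2' := hm2 (by omega)
    by_cases h : i ≤ n - 2
    · rw [if_pos h, Polynomial.coeff_add, Polynomial.finsetSum_coeff,
        Polynomial.coeff_X_pow, if_neg, zero_add]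
      · refine Finset.sum_eq_zero ?_
        intro s hs
        rw [Polynomial.coeff_X_pow, if_neg]
        omega
      · intro hE
        have hq2 : 2 ≤ n ^ (m - 1) :=
          hn.trans (Nat.le_self_pow (by omega) n)
        have hpos : 1 ≤ (i + 1) * n ^ (m - 1) := Nat.mul_pos (by omega) (by omega)
        have h1 : (i + 1) * n ^ (m - 1) = (j - n + 1) * n ^ (m - 1) + 1 := by omega
        have h2 : n ^ (m - 1) ∣ 1 :=
          (Nat.dvd_add_right (Dvd.intro_left _ rfl)).1 (h1 ▸ Dvd.intro_left (i + 1) rfl)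
        have := Nat.le_of_dvd one_pos h2
        omega
    · rw [if_neg h, if_pos (by omega), Polynomial.finsetSum_coeff]
      refine Finset.sum_eq_zero ?_
      intro s hs
      rw [Polynomial.coeff_X_pow, if_neg]
      have h1 : n ^ s ≤ n ^ (m - 1) :=
        Nat.pow_le_pow_right (by omega) (by have := Finset.mem_range.1 hs; omega)
      have h2 : n ^ s * (i - n) ≤ n ^ (m - 1) * (i - n) := Nat.mul_le_mul_right _ h1
      have h3 : n ^ (m - 1) * (i - n + 1) ≤ n ^ (m - 1) * (j - n) :=
        Nat.mul_le_mul_left _ (by omega)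
      have h4 : (j - n + 1) * n ^ (m - 1) = n ^ (m - 1) * (j - n) + n ^ (m - 1) := by ring
      have h5 : n ^ (m - 1) * (i - n + 1) = n ^ (m - 1) * (i - n) + n ^ (m - 1) := by ring
      omega

lemma P_coeff_self (n j m : ℕ) (hn : 2 ≤ n) (hm : 1 ≤ m) (hj : j ∈ Jset n) (hj1 : 1 ≤ j)
    (hj2 : j ≤ 2 * n - 2) (hm2 : n + 1 ≤ j → 2 ≤ m) :
    (P n j m).coeff (Eexp n j m) ≠ 0 := by
  simp only [Jset, Finset.mem_filter, Finset.mem_range] at hj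
  have hq : 1 ≤ n ^ (m - 1) := Nat.one_le_pow _ _ (by omega)
  rw [P, Polynomial.coeff_C_mul]
  refine mul_ne_zero ?_ ?_
  · have : (n : ℂ) ^ m = (n : ℂ) ^ (m - 1) * n := by rw [← pow_succ]; congr 1; omega
    rw [this, show (j : ℂ) * (n : ℂ) ^ (m - 1) - (n : ℂ) ^ (m - 1) * n
      = (n : ℂ) ^ (m - 1) * (j - n) by ring]
    refine mul_ne_zero (pow_ne_zero _ (by exact_mod_cast (by omega : n ≠ 0))) ?_
    rw [sub_ne_zero]
    exact_mod_cast hj.2.2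
  · by_cases hjl : j ≤ n - 2
    · rw [if_pos (by omega), Polynomial.coeff_add, Polynomial.finsetSum_coeff, Eexp, if_pos hjl]
      have hge : 2 * n ^ (m - 1) ≤ (j + 1) * n ^ (m - 1) := Nat.mul_le_mul_right _ (by omega)
      rw [Finset.sum_eq_zero]
      · simp
      intro s hs
      have : 1 ≤ n ^ s * (n - j) :=
        Nat.mul_pos (Nat.one_le_pow _ _ (by omega)) (by omega)
      rw [Polynomial.coeff_X_pow, if_neg]
      omega
    · rw [if_neg hjl, if_pos hj2, Polynomial.finsetSum_coeff, Eexp, if_neg hjl,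
        Finset.sum_eq_single (m - 1)]
      · rw [Polynomial.coeff_X_pow, if_pos (by ring)]
        exact one_ne_zero
      · intro s hs hs2
        rw [Polynomial.coeff_X_pow, if_neg]
        obtain ⟨h1, h2⟩ := pow_aux n m s hn (by have := Finset.mem_range.1 hs; omega)
        have h3 : n ^ s * (j - n) < n ^ (m - 1) * (j - n) :=
          Nat.mul_lt_mul_of_pos_right (by nlinarith) (by omega)
        have h4 : (j - n + 1) * n ^ (m - 1) = n ^ (m - 1) * (j - n) + n ^ (m - 1) := by ring
        omega
      · intro h
        simp at h; omega

lemma exists_point (n j m : ℕ) (hn : 2 ≤ n) (hm : 1 ≤ m) (hj : j ∈ Jset n) (hj1 : 1 ≤ j)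
    (hj2 : j ≤ 2 * n - 2) (hm2 : n + 1 ≤ j → 2 ≤ m) (hm3 : j = 2 * n - 2 → 3 ≤ m)
    (c : ((Jset n).filter (· ≤ j) : Finset ℕ) → ℂ)
    (hc : ∀ i : ((Jset n).filter (· ≤ j) : Finset ℕ), (i : ℕ) = j → c i ≠ 0) :
    ∃ x : ℂ, x ≠ 0 ∧ x ∈ perSet n m ∧ ∑ i, c i * (P n (i : ℕ) m).eval x ≠ 0 := by
  by_contra! hcon
  obtain ⟨G, hG1, hG2, hG3⟩ := good_set n hn m hm
  have hq : 1 ≤ n ^ (m - 1) := Nat.one_le_pow _ _ (by omega)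
  set Q : Polynomial ℂ := ∑ i, Polynomial.C (c i) * P n (i : ℕ) m with hQ
  have hjj : j ≠ n - 1 ∧ j ≠ n := by
    simp only [Jset, Finset.mem_filter] at hj; exact hj.2
  have hdeg : Q.natDegree < G.card := by
    by_cases hjl : j ≤ n - 2
    · have : Q.natDegree ≤ (j + 1) * n ^ (m - 1) - 1 := by
        refine Polynomial.natDegree_sum_le_of_forall_le _ _ ?_
        intro i _
        exact (Polynomial.natDegree_C_mul_le _ _).trans
          (P_natDegree_low n i j m hn (Finset.mem_filter.1 i.2).2 hjl)
      have h2 : (j + 1) * n ^ (m - 1) ≤ (n - 1) * n ^ (m - 1) :=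
        Nat.mul_le_mul_right _ (by omega)
      have h3 : 1 ≤ (j + 1) * n ^ (m - 1) := Nat.mul_pos (by omega) hq
      omega
    · have : Q.natDegree ≤ max ((n - 1) * n ^ (m - 1) - 1) ((j - n + 1) * n ^ (m - 1)) := by
        refine Polynomial.natDegree_sum_le_of_forall_le _ _ ?_
        intro i _
        exact (Polynomial.natDegree_C_mul_le _ _).trans
          (P_natDegree_high n i j m hn hm (Finset.mem_filter.1 i.2).1
            (Finset.mem_filter.1 i.2).2 (by omega) hj2)
      have h3 : 1 ≤ (n - 1) * n ^ (m - 1) := Nat.mul_pos (by omega) hq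
      refine this.trans_lt (max_lt (by omega) ?_)
      by_cases hje : j = 2 * n - 2
      · have := hG3 (hm3 hje)
        rwa [show j - n + 1 = n - 1 by omega]
      · have : (j - n + 1) * n ^ (m - 1) < (n - 1) * n ^ (m - 1) :=
          Nat.mul_lt_mul_of_pos_right (by omega) hq
        omega
  have hQ0 : Q = 0 := by
    refine Polynomial.eq_zero_of_natDegree_lt_card_of_eval_eq_zero' Q G ?_ hdeg
    intro x hx
    have := hcon x (hG1 x hx).1 (hG1 x hx).2
    simpa [hQ, Polynomial.eval_finsetSum] using this
  have hco : Q.coeff (Eexp n j m) = 0 := by rw [hQ0]; simp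
  have hjm : j ∈ (Jset n).filter (· ≤ j) := Finset.mem_filter.2 ⟨hj, le_rfl⟩
  rw [hQ, Polynomial.finsetSum_coeff, Finset.sum_eq_single ⟨j, hjm⟩] at hco
  · rw [Polynomial.coeff_C_mul] at hco
    exact mul_ne_zero (hc _ rfl) (P_coeff_self n j m hn hm hj hj1 hj2 hm2) hco
  · intro i _ hi
    have hi' : (i : ℕ) ≠ j := fun h => hi (Subtype.ext h)
    have := Finset.mem_filter.1 i.2
    rw [Polynomial.coeff_C_mul, P_coeff_zero n i j m hn hm this.1 hj (by omega) hj2 hm2,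
      mul_zero]
  · simp

lemma det_update (J : Finset ℕ) (j : ℕ) (hj : j ∈ J) (F : ℕ → ℕ → ℂ) :
    ((Matrix.of fun (k i : (J.filter (· ≤ j) : Finset ℕ)) => F k i).updateRow
      ⟨j, Finset.mem_filter.2 ⟨hj, le_rfl⟩⟩
      (Pi.single ⟨j, Finset.mem_filter.2 ⟨hj, le_rfl⟩⟩ 1)).det =
    (Matrix.of fun (k i : (J.filter (· < j) : Finset ℕ)) => F k i).det := by
  set j' : (J.filter (· ≤ j) : Finset ℕ) := ⟨j, Finset.mem_filter.2 ⟨hj, le_rfl⟩⟩ with hj'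
  set M := (Matrix.of fun (k i : (J.filter (· ≤ j) : Finset ℕ)) => F k i).updateRow
      j' (Pi.single j' 1) with hM
  have hne : ∀ i : (J.filter (· ≤ j) : Finset ℕ), ¬ ((i : ℕ) < j) → i = j' := by
    intro i hi
    have := (Finset.mem_filter.1 i.2).2
    exact Subtype.ext (by simp [hj']; omega)
  rw [Matrix.twoBlockTriangular_det M (fun k => (k : ℕ) < j)]
  · have h2 : (M.toSquareBlockProp fun k => ¬ ((k : ℕ) < j)) = 1 := by
      ext a b
      have ha := hne a.1 a.2
      have hb := hne b.1 b.2
      have hab : a = b := Subtype.ext (ha.trans hb.symm)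
      subst hab
      simp [Matrix.toSquareBlockProp, hM, ha]
    rw [h2, Matrix.det_one, mul_one]
    let e : (J.filter (· < j) : Finset ℕ) ≃
        {k : (J.filter (· ≤ j) : Finset ℕ) // (k : ℕ) < j} :=
      { toFun := fun k => ⟨⟨k, Finset.mem_filter.2 ⟨(Finset.mem_filter.1 k.2).1,
          (Finset.mem_filter.1 k.2).2.le⟩⟩, (Finset.mem_filter.1 k.2).2⟩
        invFun := fun k => ⟨k.1, Finset.mem_filter.2 ⟨(Finset.mem_filter.1 k.1.2).1, k.2⟩⟩
        left_inv := fun k => rfl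
        right_inv := fun k => rfl }
    rw [← Matrix.det_submatrix_equiv_self e]
    congr 1
    ext a b
    have ha : (e a).1 ≠ j' := by
      intro h
      have h2 := (e a).2
      rw [h] at h2
      exact lt_irrefl _ h2
    change M (e a).1 (e b).1 = F a b
    rw [hM, Matrix.updateRow_ne ha]
    rfl
  · intro a ha b hb
    have hb' : b ≠ j' := by
      rintro rfl
      exact lt_irrefl _ hb
    rw [hne a ha, hM, Matrix.updateRow_self, Pi.single_eq_of_ne hb']

/-- Lemma 6.4 (inductive step): under the conditions `m_k ≥ 2` for `n+1 ≤ k ≤ 2n-3` and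
`m_{2n-2} ≥ 3`, if for some `j ∈ J_n` with `1 ≤ j ≤ 2n-2` there are nonzero periodic
points `z_k` of minimal periods `m_k` (for `k ∈ J_n`, `k < j`) making the matrix with
`(k,i)`-entry `z_k^{-n^{m_k-1}} P_{n,i,m_k}(z_k)` invertible, then there are such points
for `k ∈ J_n`, `k ≤ j`, making the corresponding larger matrix invertible. -/
theorem step_one (n : ℕ) (hn : 2 ≤ n) (m : ℕ → ℕ)
    (hm1 : ∀ k ∈ Jset n, 1 ≤ m k)
    (hm2 : ∀ k, n + 1 ≤ k → k ≤ 2 * n - 3 → 2 ≤ m k)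
    (hm3 : 3 ≤ m (2 * n - 2))
    (j : ℕ) (hjJ : j ∈ Jset n) (hj1 : 1 ≤ j) (hj2 : j ≤ 2 * n - 2)
    (z : ℕ → ℂ)
    (hz : ∀ k ∈ (Jset n).filter (· < j), z k ≠ 0 ∧ z k ∈ perSet n (m k))
    (hdet : (Matrix.of fun (k i : ((Jset n).filter (· < j) : Finset ℕ)) =>
        z (k : ℕ) ^ (-((n : ℤ) ^ (m (k : ℕ) - 1))) *
          (P n (i : ℕ) (m (k : ℕ))).eval (z (k : ℕ))).det ≠ 0) :
    ∃ w : ℕ → ℂ,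
      (∀ k ∈ (Jset n).filter (· ≤ j), w k ≠ 0 ∧ w k ∈ perSet n (m k)) ∧
      (Matrix.of fun (k i : ((Jset n).filter (· ≤ j) : Finset ℕ)) =>
        w (k : ℕ) ^ (-((n : ℤ) ^ (m (k : ℕ) - 1))) *
          (P n (i : ℕ) (m (k : ℕ))).eval (w (k : ℕ))).det ≠ 0 := by
  have hm2' : n + 1 ≤ j → 2 ≤ m j := by
    intro h
    by_cases hje : j = 2 * n - 2
    · rw [hje]; omega
    · exact hm2 j h (by omega)
  have hm3' : j = 2 * n - 2 → 3 ≤ m j := by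
    intro h; rw [h]; exact hm3
  have hjm : j ∈ (Jset n).filter (· ≤ j) := Finset.mem_filter.2 ⟨hjJ, le_rfl⟩
  set A : Matrix ((Jset n).filter (· ≤ j) : Finset ℕ) ((Jset n).filter (· ≤ j) : Finset ℕ) ℂ :=
    Matrix.of fun k i => z (k : ℕ) ^ (-((n : ℤ) ^ (m (k : ℕ) - 1))) *
          (P n (i : ℕ) (m (k : ℕ))).eval (z (k : ℕ)) with hA
  have hAd : A.adjugate ⟨j, hjm⟩ ⟨j, hjm⟩ ≠ 0 := by
    rw [Matrix.adjugate_apply]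
    have := det_update (Jset n) j hjJ
      (fun k i => z k ^ (-((n : ℤ) ^ (m k - 1))) * (P n i (m k)).eval (z k))
    rw [hA, this]
    exact hdet
  obtain ⟨x, hx0, hxp, hx⟩ := exists_point n j (m j) hn (hm1 j hjJ) hjJ hj1 hj2 hm2' hm3'
    (fun i => A.adjugate i ⟨j, hjm⟩) (by
      intro i hi
      have : i = ⟨j, hjm⟩ := Subtype.ext hi
      rw [this]; exact hAd)
  refine ⟨Function.update z j x, ?_, ?_⟩
  · intro k hk
    by_cases hkj : k = j
    · subst hkj
      rw [Function.update_self]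
      exact ⟨hx0, hxp⟩
    · rw [Function.update_of_ne hkj]
      rw [Finset.mem_filter] at hk
      exact hz k (Finset.mem_filter.2 ⟨hk.1, by omega⟩)
  · have hrow : (Matrix.of fun (k i : ((Jset n).filter (· ≤ j) : Finset ℕ)) =>
        (Function.update z j x) (k : ℕ) ^ (-((n : ℤ) ^ (m (k : ℕ) - 1))) *
          (P n (i : ℕ) (m (k : ℕ))).eval ((Function.update z j x) (k : ℕ))) =
        A.updateRow ⟨j, hjm⟩ (fun i => x ^ (-((n : ℤ) ^ (m j - 1))) *
          (P n (i : ℕ) (m j)).eval x) := by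
      ext k i
      by_cases hkj : k = ⟨j, hjm⟩
      · subst hkj
        simp
      · have hkj' : (k : ℕ) ≠ j := fun h => hkj (Subtype.ext h)
        rw [Matrix.updateRow_ne hkj]
        simp [hA, Function.update_of_ne hkj']
    rw [hrow, Matrix.det_eq_sum_mul_adjugate_row _ ⟨j, hjm⟩]
    have : ∀ i, (A.updateRow ⟨j, hjm⟩ (fun i => x ^ (-((n : ℤ) ^ (m j - 1))) *
          (P n (i : ℕ) (m j)).eval x)) ⟨j, hjm⟩ i *
        (A.updateRow ⟨j, hjm⟩ (fun i => x ^ (-((n : ℤ) ^ (m j - 1))) *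
          (P n (i : ℕ) (m j)).eval x)).adjugate i ⟨j, hjm⟩ =
        x ^ (-((n : ℤ) ^ (m j - 1))) *
          (A.adjugate i ⟨j, hjm⟩ * (P n (i : ℕ) (m j)).eval x) := by
      intro i
      rw [Matrix.updateRow_self, Matrix.adjugate_apply, Matrix.updateRow_idem,
        ← Matrix.adjugate_apply]
      ring
    rw [Finset.sum_congr rfl (fun i _ => this i), ← Finset.mul_sum]
    exact mul_ne_zero (zpow_ne_zero _ hx0) hx
end
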